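/- arXiv:0801.0174 — 3 statements merged into one kernel-verified Lean document; each statement's English description precedes it below -/
import Mathlib

section
/- Consider a commutative diagram of abelian groups whose two (identical-shaped) rows are exact sequences 0 → A →f B →g C →h D → 0, with vertical endomorphisms a : A → A, b : B → B, c : C → C, d : D → D satisfying f ∘ a = b ∘ f, g ∘ b = c ∘ g, and h ∘ c = d ∘ h. If A, C and D are free and finitely generated ℤ-modules, then B is also a free and finitely generated ℤ-module, and the determinants of the vertical endomorphisms satisfy det(a)·det(c) = det(b)·det(d). -/
/-!
Freeness of `B` over a principal ideal domain comes from finiteness and torsion-freeness. The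
determinant formula holds over every commutative ring as soon as `B` is free. There `ker h` need
not be free, so the four-term sequence is not cut at `ker h`. Instead, a section `s` of `h` turns
it into the short exact sequence `0 → A → B × D → C → 0` with second map `(y, z) ↦ g y + s z`.
The section need not commute with the endomorphisms, but the defect `c ∘ s - s ∘ d` takes values in
`ker h = range g`, so it is `g ∘ t` for some `t : D → B`. The endomorphism
`(y, z) ↦ (b y + t z, d z)` of `B × D` is then compatible with `a` and `c`, whence its determinant
is `det a * det c`, and it is block triangular, whence its determinant is `det b * det d`.
-/

section Exact

variable {R A B C D P : Type*} [Ring R] [AddCommGroup A] [Module R A] [AddCommGroup B] [Module R B]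
  [AddCommGroup C] [Module R C] [AddCommGroup D] [Module R D] [AddCommGroup P] [Module R P]

theorem exists_comp_eq_of_exact [Module.Projective R P] {f : A →ₗ[R] B} {g : B →ₗ[R] C}
    (hfg : Function.Exact f g) {k : P →ₗ[R] B} (hk : g ∘ₗ k = 0) :
    ∃ t : P →ₗ[R] A, f ∘ₗ t = k := by
  have k_mem_range (z : P) : k z ∈ LinearMap.range f := (hfg _).mp (LinearMap.congr_fun hk z)
  obtain ⟨t, ht⟩ := Module.projective_lifting_property f.rangeRestrict
    (k.codRestrict _ k_mem_range) f.surjective_rangeRestrict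
  exact ⟨t, LinearMap.ext fun z ↦ congrArg Subtype.val (LinearMap.congr_fun ht z)⟩

theorem isTorsionFree_of_exact [Module.IsTorsionFree R A] [Module.IsTorsionFree R C]
    {f : A →ₗ[R] B} {g : B →ₗ[R] C} (hf : Function.Injective f) (hfg : Function.Exact f g) :
    Module.IsTorsionFree R B where
  isSMulRegular _ hr := isSMulRegular_of_range_eq_ker hf (LinearMap.exact_iff.mp hfg).symm
    hr.isSMulRegular hr.isSMulRegular

theorem exact_inl_comp_coprod {f : A →ₗ[R] B} {g : B →ₗ[R] C} {h : C →ₗ[R] D} {s : D →ₗ[R] C}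
    (hfg : Function.Exact f g) (hgh : h ∘ₗ g = 0) (hs : h ∘ₗ s = LinearMap.id) :
    Function.Exact (LinearMap.inl R B D ∘ₗ f) (g.coprod s) := by
  rintro ⟨y, z⟩
  constructor
  · intro hyz
    obtain rfl : z = 0 := by
      simpa [← LinearMap.comp_apply, hgh, hs] using congrArg h hyz
    obtain ⟨x, rfl⟩ := (hfg y).mp (by simpa using hyz)
    exact ⟨x, rfl⟩
  · rintro ⟨x, hx⟩
    simp [← hx, hfg.apply_apply_eq_zero]

theorem coprod_surjective_of_exact {g : B →ₗ[R] C} {h : C →ₗ[R] D} {s : D →ₗ[R] C}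
    (hgh : Function.Exact g h) (hs : h ∘ₗ s = LinearMap.id) :
    Function.Surjective (g.coprod s) := by
  intro x
  obtain ⟨y, hy⟩ := (hgh (x - s (h x))).mp (by simp [← LinearMap.comp_apply h s, hs])
  exact ⟨(y, h x), by simp [hy]⟩

theorem finite_of_exact [Module.Finite R A] [Module.Finite R C] [Module.Projective R D]
    {f : A →ₗ[R] B} {g : B →ₗ[R] C} {h : C →ₗ[R] D} (hfg : Function.Exact f g)
    (hgh : Function.Exact g h) (hh : Function.Surjective h) : Module.Finite R B := by
  obtain ⟨s, hs⟩ := h.exists_rightInverse_of_surjective (LinearMap.range_eq_top.mpr hh)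
  have : Module.Finite R (B × D) := Module.Finite.of_exact
    (exact_inl_comp_coprod hfg hgh.linearMap_comp_eq_zero hs) (coprod_surjective_of_exact hgh hs)
  exact Module.Finite.of_surjective (LinearMap.fst R B D) LinearMap.fst_surjective

end Exact

section Determinant

variable {R A B C D : Type*} [CommRing R] [AddCommGroup A] [Module R A] [AddCommGroup B]
  [Module R B] [AddCommGroup C] [Module R C] [AddCommGroup D] [Module R D]

theorem det_eq_of_linearEquiv_comp_eq (e : A ≃ₗ[R] B) {a : A →ₗ[R] A} {b : B →ₗ[R] B}
    (h : e.toLinearMap ∘ₗ a = b ∘ₗ e.toLinearMap) : LinearMap.det a = LinearMap.det b := by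
  rw [← LinearMap.det_conj a e, ← LinearMap.comp_assoc, h, LinearMap.comp_assoc,
    LinearEquiv.comp_symm, LinearMap.comp_id]

theorem det_eq_det_mul_det_of_exact [Module.Free R A] [Module.Finite R A] [Module.Free R C]
    [Module.Finite R C] {f : A →ₗ[R] B} {g : B →ₗ[R] C} {a : A →ₗ[R] A} {b : B →ₗ[R] B}
    {c : C →ₗ[R] C} (hf : Function.Injective f) (hfg : Function.Exact f g)
    (hg : Function.Surjective g) (hab : f ∘ₗ a = b ∘ₗ f) (hbc : g ∘ₗ b = c ∘ₗ g) :
    LinearMap.det b = LinearMap.det a * LinearMap.det c := by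
  let eA : A ≃ₗ[R] LinearMap.range f := LinearEquiv.ofInjective f hf
  let eC : (B ⧸ LinearMap.range f) ≃ₗ[R] C := hfg.linearEquivOfSurjective hg
  have : Module.Finite R B := Module.Finite.of_exact hfg hg
  have : Module.Free R (LinearMap.range f) := Module.Free.of_equiv eA
  have : Module.Free R (B ⧸ LinearMap.range f) := Module.Free.of_equiv eC.symm
  have range_le_comap : LinearMap.range f ≤ (LinearMap.range f).comap b := by
    rintro _ ⟨x, rfl⟩
    exact ⟨a x, LinearMap.congr_fun hab x⟩
  have det_sub : LinearMap.det a = LinearMap.det (b.restrict range_le_comap) :=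
    det_eq_of_linearEquiv_comp_eq eA <| LinearMap.ext fun x ↦
      Subtype.ext (LinearMap.congr_fun hab x)
  have det_quot : LinearMap.det ((LinearMap.range f).mapQ _ b range_le_comap) = LinearMap.det c :=
    det_eq_of_linearEquiv_comp_eq eC <| Submodule.linearMap_qext _ hbc
  rw [LinearMap.det_eq_det_mul_det (LinearMap.range f) b range_le_comap, det_sub, det_quot]

theorem det_prod_of_upperTriangular [Module.Free R B] [Module.Finite R B] [Module.Free R D]
    [Module.Finite R D] (b : B →ₗ[R] B) (t : D →ₗ[R] B) (d : D →ₗ[R] D) :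
    LinearMap.det ((b.coprod t).prod (d ∘ₗ LinearMap.snd R B D)) =
      LinearMap.det b * LinearMap.det d :=
  det_eq_det_mul_det_of_exact LinearMap.inl_injective Function.Exact.inl_snd
    LinearMap.snd_surjective (by ext <;> simp) (LinearMap.snd_prod _ _)

theorem det_mul_det_eq_det_mul_det_of_exact [Module.Free R A] [Module.Finite R A] [Module.Free R B]
    [Module.Free R C] [Module.Finite R C] [Module.Free R D]
    {f : A →ₗ[R] B} {g : B →ₗ[R] C} {h : C →ₗ[R] D}
    {a : A →ₗ[R] A} {b : B →ₗ[R] B} {c : C →ₗ[R] C} {d : D →ₗ[R] D}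
    (hf : Function.Injective f) (hfg : Function.Exact f g) (hgh : Function.Exact g h)
    (hh : Function.Surjective h) (hab : f ∘ₗ a = b ∘ₗ f) (hbc : g ∘ₗ b = c ∘ₗ g)
    (hcd : h ∘ₗ c = d ∘ₗ h) :
    LinearMap.det a * LinearMap.det c = LinearMap.det b * LinearMap.det d := by
  have : Module.Finite R D := Module.Finite.of_surjective h hh
  have : Module.Finite R B := finite_of_exact hfg hgh hh
  obtain ⟨s, hs⟩ := h.exists_rightInverse_of_surjective (LinearMap.range_eq_top.mpr hh)
  have comp_defect_eq_zero : h ∘ₗ (c ∘ₗ s - s ∘ₗ d) = 0 := by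
    rw [LinearMap.comp_sub, ← LinearMap.comp_assoc, ← LinearMap.comp_assoc, hcd,
      LinearMap.comp_assoc, hs, LinearMap.comp_id, LinearMap.id_comp, sub_self]
  obtain ⟨t, ht⟩ := exists_comp_eq_of_exact hgh comp_defect_eq_zero
  let b' : B × D →ₗ[R] B × D := (b.coprod t).prod (d ∘ₗ LinearMap.snd R B D)
  have hab' : (LinearMap.inl R B D ∘ₗ f) ∘ₗ a = b' ∘ₗ (LinearMap.inl R B D ∘ₗ f) := by
    ext x
    · simpa [b'] using LinearMap.congr_fun hab x
    · simp [b']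
  have hbc' : g.coprod s ∘ₗ b' = c ∘ₗ g.coprod s := by
    ext x
    · simpa [b'] using LinearMap.congr_fun hbc x
    · simpa [b'] using congrArg (· + s (d x)) (LinearMap.congr_fun ht x)
  calc LinearMap.det a * LinearMap.det c
      = LinearMap.det b' :=
        (det_eq_det_mul_det_of_exact (LinearMap.inl_injective.comp hf)
          (exact_inl_comp_coprod hfg hgh.linearMap_comp_eq_zero hs)
          (coprod_surjective_of_exact hgh hs) hab' hbc').symm
    _ = LinearMap.det b * LinearMap.det d := det_prod_of_upperTriangular b t d

end Determinant

theorem stmt0_general {R A B C D : Type*} [CommRing R] [IsDomain R] [IsPrincipalIdealRing R]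
    [AddCommGroup A] [Module R A] [AddCommGroup B] [Module R B] [AddCommGroup C] [Module R C]
    [AddCommGroup D] [Module R D] [Module.Free R A] [Module.Finite R A] [Module.Free R C]
    [Module.Finite R C] [Module.Free R D] {f : A →ₗ[R] B} {g : B →ₗ[R] C} {h : C →ₗ[R] D}
    {a : A →ₗ[R] A} {b : B →ₗ[R] B} {c : C →ₗ[R] C} {d : D →ₗ[R] D}
    (hf : Function.Injective f) (hfg : Function.Exact f g) (hgh : Function.Exact g h)
    (hh : Function.Surjective h) (hab : f ∘ₗ a = b ∘ₗ f) (hbc : g ∘ₗ b = c ∘ₗ g)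
    (hcd : h ∘ₗ c = d ∘ₗ h) :
    Module.Free R B ∧ Module.Finite R B ∧
      LinearMap.det a * LinearMap.det c = LinearMap.det b * LinearMap.det d := by
  have : Module.Finite R B := finite_of_exact hfg hgh hh
  have : Module.IsTorsionFree R B := isTorsionFree_of_exact hf hfg
  exact ⟨inferInstance, inferInstance,
    det_mul_det_eq_det_mul_det_of_exact hf hfg hgh hh hab hbc hcd⟩

/-- Given a commutative diagram of abelian groups whose two rows are the
exact sequence `0 → A →f B →g C →h D → 0`, with vertical endomorphisms `a, b, c, d`
commuting with `f, g, h`: if `A`, `C` and `D` are free and finitely generated `ℤ`-modules,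
then so is `B`, and `det a * det c = det b * det d`. -/
theorem stmt0
    (A B C D : Type) [AddCommGroup A] [Module ℤ A] [AddCommGroup B] [Module ℤ B]
    [AddCommGroup C] [Module ℤ C] [AddCommGroup D] [Module ℤ D]
    (f : A →ₗ[ℤ] B) (g : B →ₗ[ℤ] C) (h : C →ₗ[ℤ] D)
    (a : A →ₗ[ℤ] A) (b : B →ₗ[ℤ] B) (c : C →ₗ[ℤ] C) (d : D →ₗ[ℤ] D)
    (hf : Function.Injective f)
    (hfg : LinearMap.range f = LinearMap.ker g)
    (hgh : LinearMap.range g = LinearMap.ker h)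
    (hh : Function.Surjective h)
    (hcomm₁ : f.comp a = b.comp f)
    (hcomm₂ : g.comp b = c.comp g)
    (hcomm₃ : h.comp c = d.comp h)
    (hAfree : Module.Free ℤ A) (hAfin : Module.Finite ℤ A)
    (hCfree : Module.Free ℤ C) (hCfin : Module.Finite ℤ C)
    (hDfree : Module.Free ℤ D) (hDfin : Module.Finite ℤ D) :
    Module.Free ℤ B ∧ Module.Finite ℤ B ∧
      LinearMap.det a * LinearMap.det c = LinearMap.det b * LinearMap.det d := by
  exact stmt0_general hf (LinearMap.exact_iff.mpr hfg.symm) (LinearMap.exact_iff.mpr hgh.symm) hh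
    hcomm₁ hcomm₂ hcomm₃
end

section
/- Let 𝐇 be a non-unital Batalin–Vilkovisky algebra over F and let ℋ = (ℋ_n)_{n∈ℤ} be a ℤ-graded F-vector space, equipped for every n with F-linear maps E : 𝐇_n → ℋ_{n+ε}, S : ℋ_{n+ε} → ℋ_{n+ε−2}, and M : ℋ_{n+ε−2} → 𝐇_{n−1}, forming a long exact sequence ⋯ → 𝐇_n →E ℋ_{n+ε} →S ℋ_{n+ε−2} →M 𝐇_{n−1} →E ⋯ (i.e. im E = ker S, im S = ker M, and im M = ker E at each spot). Assume that the operator Δ of 𝐇 equals M ∘ E. Then the operation {a,b}' := (−1)^{|a|} E(M(a)·M(b)), defined for homogeneous a, b ∈ ℋ and extended bilinearly, is a graded Lie bracket of degree 2−ε on ℋ: it maps ℋ_i × ℋ_j to ℋ_{i+j+2−ε}, satisfies the graded antisymmetry {a,b}' = −(−1)^{(|a|+ε)(|b|+ε)} {b,a}', and satisfies the graded Jacobi identity {a,{b,c}'}' = {{a,b}',c}' + (−1)^{(|a|+ε)(|b|+ε)} {b,{a,c}'}'. Moreover M is a morphism of graded Lie algebras up to sign: {M(a),M(b)} = (−1)^{1−ε}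 M({a,b}') for all homogeneous a, b ∈ ℋ, where {−,−} denotes the Batalin–Vilkovisky bracket of 𝐇. -/
/-!
Exactness gives `E ∘ M = 0`, so `Δ = M ∘ E` annihilates the image of `M` and is annihilated by `E`.
Hence `{M a, M b} = ± M E (M a · M b)`, which compares the two brackets. Since `E ∘ Δ = 0`, applying
`E` to `{M a, v}` leaves only `-E (M a · Δ v)`; for `v = M b · M c` this is, up to sign,
`{a, {b, c}'}'`. The Jacobi identity on `ℋ` is therefore the image under `E` of the Leibniz rule for
`{M a, -}` on the product `M b · M c`.
-/

lemma neg_one_zpow_smul_eq_negOnePow_smul {K U : Type*} [DivisionRing K] [AddCommGroup U]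
    [Module K U] (n : ℤ) (u : U) : (-1 : K) ^ n • u = n.negOnePow • u := by
  rcases n.even_or_odd with hn | hn
  · rw [hn.neg_one_zpow, Int.negOnePow_even n hn, one_smul, one_smul]
  · rw [hn.neg_one_zpow, Int.negOnePow_odd n hn, neg_smul, Units.neg_smul, one_smul, one_smul]

section Brackets

variable {R V W : Type*} [CommRing R] [AddCommGroup V] [Module R V] [AddCommGroup W] [Module R W]

/-- The Batalin–Vilkovisky bracket `{x, y}` of an operator `Δ`: the failure of `Δ` to be a
derivation of the product `mul`. The degree `i` of `x`, on which the signs depend, is passed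
explicitly, so that the formula makes sense for arbitrary `x`. -/
def bvBracket (mul : V →ₗ[R] V →ₗ[R] V) (Δ : V →ₗ[R] V) (i : ℤ) (x y : V) : V :=
  i.negOnePow • Δ (mul x y) - i.negOnePow • mul (Δ x) y - mul x (Δ y)

/-- The string bracket `{a, b}'`, obtained by multiplying the images of `a` and `b` under `M` and
returning along `E`. As in `bvBracket`, the degree `i` of `a` is passed explicitly. -/
def stringBracket (mul : V →ₗ[R] V →ₗ[R] V) (E : V →ₗ[R] W) (M : W →ₗ[R] V) (i : ℤ) (a b : W) : W :=
  i.negOnePow • E (mul (M a) (M b))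

variable {mul : V →ₗ[R] V →ₗ[R] V} {E : V →ₗ[R] W} {M : W →ₗ[R] V}

lemma map_mul_map_map_eq_smul_stringBracket (i : ℤ) (a b : W) :
    E (mul (M a) (M b)) = i.negOnePow • stringBracket mul E M i a b := by
  rw [stringBracket, smul_smul, Int.units_mul_self, one_smul]

lemma stringBracket_mem {A : ℤ → Submodule R V} {B : ℤ → Submodule R W} {ε i j : ℤ} {a b : W}
    (hmul : ∀ i j, ∀ x ∈ A i, ∀ y ∈ A j, mul x y ∈ A (i + j))
    (hE : ∀ n, ∀ x ∈ A n, E x ∈ B (n + ε)) (hM : ∀ m, ∀ a ∈ B m, M a ∈ A (m - ε + 1))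
    (ha : a ∈ B i) (hb : b ∈ B j) :
    stringBracket mul E M i a b ∈ B (i + j + 2 - ε) := by
  have hmem := hE _ _ (hmul _ _ _ (hM i a ha) _ (hM j b hb))
  rw [show i - ε + 1 + (j - ε + 1) + ε = i + j + 2 - ε by ring] at hmem
  exact (B _).smul_of_tower_mem i.negOnePow hmem

lemma stringBracket_antisymm {ε i j : ℤ} {a b : W}
    (hcomm : mul (M a) (M b) =
      ((i - ε + 1) * (j - ε + 1)).negOnePow • mul (M b) (M a)) :
    stringBracket mul E M i a b =
      -(((i + ε) * (j + ε)).negOnePow • stringBracket mul E M j b a) := by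
  have hsign : (i + (i - ε + 1) * (j - ε + 1)).negOnePow =
      ((i + ε) * (j + ε) + j + 1).negOnePow :=
    (Int.negOnePow_eq_iff _ _).mpr ⟨i - i * ε - j * ε - ε, by ring⟩
  rw [stringBracket, hcomm, E.map_smul_of_tower, smul_smul, ← Int.negOnePow_add, hsign,
    Int.negOnePow_succ, Units.neg_smul, Int.negOnePow_add, mul_smul, stringBracket]

lemma bvBracket_map_map (hEM : ∀ a, E (M a) = 0) (p i : ℤ) (a b : W) :
    bvBracket mul (M ∘ₗ E) p (M a) (M b) =
      (p + i).negOnePow • M (stringBracket mul E M i a b) := by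
  simp only [bvBracket, LinearMap.comp_apply, hEM, map_zero, LinearMap.zero_apply, smul_zero,
    sub_zero]
  rw [map_mul_map_map_eq_smul_stringBracket i, M.map_smul_of_tower, smul_smul, Int.negOnePow_add]

lemma map_bvBracket_map_left (hEM : ∀ a, E (M a) = 0) (p : ℤ) (a : W) (v : V) :
    E (bvBracket mul (M ∘ₗ E) p (M a) v) = -E (mul (M a) (M (E v))) := by
  simp only [bvBracket, LinearMap.comp_apply, hEM, map_sub, E.map_smul_of_tower, map_zero,
    LinearMap.zero_apply, smul_zero, sub_zero, zero_sub]

lemma stringBracket_stringBracket_right (hEM : ∀ a, E (M a) = 0) (p i j : ℤ) (a b c : W) :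
    stringBracket mul E M i a (stringBracket mul E M j b c) =
      (i + j + 1).negOnePow • E (bvBracket mul (M ∘ₗ E) p (M a) (mul (M b) (M c))) := by
  rw [map_bvBracket_map_left hEM, Int.negOnePow_succ, Units.neg_smul, smul_neg, neg_neg,
    Int.negOnePow_add, mul_smul]
  simp only [stringBracket, LinearMap.map_smul_of_tower]

lemma map_mul_bvBracket_map_map_left (hEM : ∀ a, E (M a) = 0) (p i k : ℤ) (a b c : W) :
    E (mul (bvBracket mul (M ∘ₗ E) p (M a) (M b)) (M c)) =
      (p + i + k).negOnePow • stringBracket mul E M k (stringBracket mul E M i a b) c := by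
  rw [bvBracket_map_map hEM p i, mul.map_smul_of_tower, LinearMap.smul_apply, E.map_smul_of_tower,
    map_mul_map_map_eq_smul_stringBracket k, smul_smul, ← Int.negOnePow_add]

lemma map_mul_bvBracket_map_map_right (hEM : ∀ a, E (M a) = 0) (p i j : ℤ) (a b c : W) :
    E (mul (M b) (bvBracket mul (M ∘ₗ E) p (M a) (M c))) =
      (p + i + j).negOnePow • stringBracket mul E M j b (stringBracket mul E M i a c) := by
  rw [bvBracket_map_map hEM p i, LinearMap.map_smul_of_tower, E.map_smul_of_tower,
    map_mul_map_map_eq_smul_stringBracket j, smul_smul, ← Int.negOnePow_add]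

lemma stringBracket_jacobi (hEM : ∀ a, E (M a) = 0) {ε i j : ℤ} {a b c : W}
    (hder : bvBracket mul (M ∘ₗ E) (i - ε + 1) (M a) (mul (M b) (M c)) =
      mul (bvBracket mul (M ∘ₗ E) (i - ε + 1) (M a) (M b)) (M c) +
        ((j - ε + 1) * (i - ε + 1 + 1)).negOnePow •
          mul (M b) (bvBracket mul (M ∘ₗ E) (i - ε + 1) (M a) (M c))) :
    stringBracket mul E M i a (stringBracket mul E M j b c) =
      stringBracket mul E M (i + j + 2 - ε) (stringBracket mul E M i a b) c +
        ((i + ε) * (j + ε)).negOnePow •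
          stringBracket mul E M j b (stringBracket mul E M i a c) := by
  have hsign_left :
      (i + j + 1 + (i - ε + 1 + i + (i + j + 2 - ε))).negOnePow = 1 :=
    Int.negOnePow_even _ ⟨2 * i + j - ε + 2, by ring⟩
  have hsign_right :
      (i + j + 1 + ((j - ε + 1) * (i - ε + 1 + 1) + (i - ε + 1 + i + j))).negOnePow =
        ((i + ε) * (j + ε)).negOnePow :=
    (Int.negOnePow_eq_iff _ _).mpr ⟨2 * i + 2 * j - i * ε - j * ε - 2 * ε + 2, by ring⟩
  rw [stringBracket_stringBracket_right hEM (i - ε + 1), hder, map_add, E.map_smul_of_tower,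
    map_mul_bvBracket_map_map_left hEM _ i (i + j + 2 - ε),
    map_mul_bvBracket_map_map_right hEM _ i j]
  simp only [smul_add, smul_smul, ← Int.negOnePow_add, hsign_left, hsign_right, one_smul]

theorem stmt2_general {A : ℤ → Submodule R V} {B : ℤ → Submodule R W} {ε : ℤ}
    (hmul_deg : ∀ i j, ∀ x ∈ A i, ∀ y ∈ A j, mul x y ∈ A (i + j))
    (hmul_comm : ∀ i j, ∀ x ∈ A i, ∀ y ∈ A j, mul x y = (i * j).negOnePow • mul y x)
    (hder : ∀ i j k, ∀ x ∈ A i, ∀ y ∈ A j, ∀ z ∈ A k,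
      bvBracket mul (M ∘ₗ E) i x (mul y z) =
        mul (bvBracket mul (M ∘ₗ E) i x y) z +
          (j * (i + 1)).negOnePow • mul y (bvBracket mul (M ∘ₗ E) i x z))
    (hE_deg : ∀ n, ∀ x ∈ A n, E x ∈ B (n + ε))
    (hM_deg : ∀ m, ∀ a ∈ B m, M a ∈ A (m - ε + 1))
    (hEM : ∀ a, E (M a) = 0) :
    (∀ i j, ∀ a ∈ B i, ∀ b ∈ B j, stringBracket mul E M i a b ∈ B (i + j + 2 - ε)) ∧
    (∀ i j, ∀ a ∈ B i, ∀ b ∈ B j,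
      stringBracket mul E M i a b =
        -(((i + ε) * (j + ε)).negOnePow • stringBracket mul E M j b a)) ∧
    (∀ i j k, ∀ a ∈ B i, ∀ b ∈ B j, ∀ c ∈ B k,
      stringBracket mul E M i a (stringBracket mul E M j b c) =
        stringBracket mul E M (i + j + 2 - ε) (stringBracket mul E M i a b) c +
          ((i + ε) * (j + ε)).negOnePow •
            stringBracket mul E M j b (stringBracket mul E M i a c)) ∧
    (∀ i j, ∀ a ∈ B i, ∀ b ∈ B j,
      bvBracket mul (M ∘ₗ E) (i - ε + 1) (M a) (M b) =
        (1 - ε).negOnePow • M (stringBracket mul E M i a b)) := by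
  refine ⟨fun i j a ha b hb => stringBracket_mem hmul_deg hE_deg hM_deg ha hb,
    fun i j a ha b hb => stringBracket_antisymm
      (hmul_comm _ _ _ (hM_deg i a ha) _ (hM_deg j b hb)),
    fun i j k a ha b hb c hc => stringBracket_jacobi hEM
      (hder _ _ _ _ (hM_deg i a ha) _ (hM_deg j b hb) _ (hM_deg k c hc)),
    fun i j a _ b _ => ?_⟩
  have hsign : (i - ε + 1 + i).negOnePow = (1 - ε).negOnePow :=
    (Int.negOnePow_eq_iff _ _).mpr ⟨i, by ring⟩
  rw [bvBracket_map_map hEM _ i, hsign]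

end Brackets

/-- Lemma on the definition of the string bracket.
Let `𝐇` be a non-unital Batalin–Vilkovisky algebra over a field `F` (formalized as an
ambient `F`-vector space `V` with grading `A : ℤ → Submodule F V`, a bilinear associative
graded-commutative product `mul` of degree `0`, and a degree `+1` operator `Δ` with
`Δ ∘ Δ = 0` whose associated bracket `br` is a graded derivation in each variable), and
let `ℋ` be a graded vector space (ambient space `W` with grading `B : ℤ → Submodule F W`)
with linear maps `E : 𝐇_n → ℋ_{n+ε}`, `S : ℋ_{n+ε} → ℋ_{n+ε-2}`, `M : ℋ_{n+ε-2} → 𝐇_{n-1}`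
forming a long exact sequence, and such that `Δ = M ∘ E`.  Then the bracket
`{a,b}' := (-1)^{|a|} E (M a · M b)` is a graded Lie bracket of degree `2 - ε` on `ℋ`
(it maps `ℋ_i × ℋ_j` to `ℋ_{i+j+2-ε}`, is graded antisymmetric and satisfies the graded
Jacobi identity for the degrees shifted by `ε`), and `M` is a morphism of graded Lie
algebras up to the sign `(-1)^{1-ε}`. -/
theorem stmt2
    (F : Type) [Field F] (ε : ℤ)
    (V : Type) [AddCommGroup V] [Module F V] (A : ℤ → Submodule F V)
    (mul : V →ₗ[F] V →ₗ[F] V) (Δ : V →ₗ[F] V)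
    (W : Type) [AddCommGroup W] [Module F W] (B : ℤ → Submodule F W)
    (E : V →ₗ[F] W) (S : W →ₗ[F] W) (M : W →ₗ[F] V)
    -- the product is of degree 0, associative and graded commutative
    (hmul_deg : ∀ (i j : ℤ), ∀ x ∈ A i, ∀ y ∈ A j, mul x y ∈ A (i + j))
    (hmul_assoc : ∀ x y z : V, mul (mul x y) z = mul x (mul y z))
    (hmul_comm : ∀ (i j : ℤ), ∀ x ∈ A i, ∀ y ∈ A j,
      mul x y = ((-1 : F) ^ (i * j)) • mul y x)
    -- Δ is of degree +1 and squares to zero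
    (hΔ_deg : ∀ (i : ℤ), ∀ x ∈ A i, Δ x ∈ A (i + 1))
    (hΔΔ : ∀ x : V, Δ (Δ x) = 0)
    -- the Batalin–Vilkovisky bracket `br i x y` (for `x` homogeneous of degree `i`)
    -- and the hypothesis that it is a graded derivation in each variable
    (br : ℤ → V → V → V)
    (hbr : ∀ (i : ℤ) (x y : V), br i x y =
      ((-1 : F) ^ i) • Δ (mul x y) - ((-1 : F) ^ i) • mul (Δ x) y - mul x (Δ y))
    (hbr_der : ∀ (i j k : ℤ), ∀ x ∈ A i, ∀ y ∈ A j, ∀ z ∈ A k,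
      br i x (mul y z) =
        mul (br i x y) z + ((-1 : F) ^ (j * (i + 1))) • mul y (br i x z))
    -- degrees of E, S and M
    (hE_deg : ∀ (n : ℤ), ∀ x ∈ A n, E x ∈ B (n + ε))
    (hS_deg : ∀ (m : ℤ), ∀ a ∈ B m, S a ∈ B (m - 2))
    (hM_deg : ∀ (m : ℤ), ∀ a ∈ B m, M a ∈ A (m - ε + 1))
    -- exactness of the long exact sequence ⋯ → 𝐇 →E ℋ →S ℋ →M 𝐇 → ⋯
    (hexact₁ : LinearMap.range E = LinearMap.ker S)
    (hexact₂ : LinearMap.range S = LinearMap.ker M)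
    (hexact₃ : LinearMap.range M = LinearMap.ker E)
    -- the operator Δ equals M ∘ E
    (hΔME : ∀ x : V, M (E x) = Δ x)
    -- the bracket on ℋ : {a,b}' := (-1)^{|a|} E (M a · M b)
    (br' : ℤ → W → W → W)
    (hbr' : ∀ (i : ℤ) (a b : W), br' i a b = ((-1 : F) ^ i) • E (mul (M a) (M b))) :
    -- {−,−}' is of degree 2 - ε
    (∀ (i j : ℤ), ∀ a ∈ B i, ∀ b ∈ B j, br' i a b ∈ B (i + j + 2 - ε)) ∧
    -- graded antisymmetry
    (∀ (i j : ℤ), ∀ a ∈ B i, ∀ b ∈ B j,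
      br' i a b = -(((-1 : F) ^ ((i + ε) * (j + ε))) • br' j b a)) ∧
    -- graded Jacobi identity
    (∀ (i j k : ℤ), ∀ a ∈ B i, ∀ b ∈ B j, ∀ c ∈ B k,
      br' i a (br' j b c) =
        br' (i + j + 2 - ε) (br' i a b) c +
          ((-1 : F) ^ ((i + ε) * (j + ε))) • br' j b (br' i a c)) ∧
    -- M is a morphism of graded Lie algebras up to the sign (-1)^{1-ε}
    (∀ (i j : ℤ), ∀ a ∈ B i, ∀ b ∈ B j,
      br (i - ε + 1) (M a) (M b) = ((-1 : F) ^ (1 - ε)) • M (br' i a b)) := by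
  simp only [neg_one_zpow_smul_eq_negOnePow_smul] at hmul_comm hbr hbr_der hbr' ⊢
  obtain rfl : M ∘ₗ E = Δ := LinearMap.ext hΔME
  obtain rfl : br = bvBracket mul (M ∘ₗ E) := funext₃ hbr
  obtain rfl : br' = stringBracket mul E M := funext₃ hbr'
  exact stmt2_general hmul_deg hmul_comm hbr_der hE_deg hM_deg
    fun a => LinearMap.mem_ker.mp (hexact₃ ▸ LinearMap.mem_range_self M a)
end

section
/- Let H be a finite-dimensional Hopf algebra over a field F with antipode S. Then H is a symmetric Frobenius algebra (i.e. admits a symmetric Frobenius form) if and only if H is unimodular and S² = S ∘ S is an inner automorphism of H, i.e. there exists an invertible element u ∈ H such that S(S(h)) = u·h·u⁻¹ for all h ∈ H. -/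
/-!
Suppose `H` has a nonzero two-sided integral `L`, and write `S` for the antipode. The elements
`L₁ λ(L₂)`, for `λ` in the dual of `H`, form a right ideal because `L₁ h ⊗ L₂ = L₁ ⊗ L₂ S(h)`. It
contains `L₁ S(L₂) f(L₃) = f(L) 1` for every functional `f`, so some `λ` satisfies `L₁ λ(L₂) = 1`.
For this `λ` one gets `L₁ λ(L₂ S(h)) = h` and `L₁ λ(h L₂) = S(h)`. The first identity shows that `S`
is injective and that `λ` is a Frobenius functional; the two together identify its Nakayama
automorphism as `S²`, that is, `λ(y z) = λ(z S²(y))`.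

Any two Frobenius functionals differ by a unit, so an algebra with a Frobenius functional of
Nakayama automorphism `ν` is symmetric exactly when `ν` is inner. Conversely, if `t` is a symmetric
Frobenius functional then the element `L` representing the counit, `ε = t(L ·)`, is a nonzero
two-sided integral.
-/

open Coalgebra HopfAlgebra TensorProduct WithConv

section Frobenius

variable {F A : Type*} [Field F] [Ring A] [Algebra F A]

/-- A Frobenius functional on an `F`-algebra: a linear functional `t` whose associated form
`(x, y) ↦ t (x * y)` is nondegenerate. -/
def IsFrobenius (t : Module.Dual F A) : Prop :=
  LinearMap.BilinForm.Nondegenerate ((LinearMap.mul F A).compr₂ t)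

theorem exists_symmetric_frobenius_form_iff :
    (∃ β : A →ₗ[F] A →ₗ[F] F,
        (∀ x, (∀ y, β x y = 0) → x = 0) ∧
        (∀ y, (∀ x, β x y = 0) → y = 0) ∧
        (∀ x y z, β (x * y) z = β x (y * z)) ∧
        (∀ x y, β x y = β y x)) ↔
      ∃ t : Module.Dual F A, IsFrobenius t ∧ ∀ x y, t (x * y) = t (y * x) := by
  constructor
  · rintro ⟨β, hleft, hright, hassoc, hsymm⟩
    have hβ : (LinearMap.mul F A).compr₂ (β 1) = β := by
      ext x y
      simp [← hassoc]
    have hβ_apply (x y : A) : β 1 (x * y) = β x y := LinearMap.congr_fun₂ hβ x y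
    refine ⟨β 1, ?_, fun x y ↦ by rw [hβ_apply, hβ_apply, hsymm]⟩
    rw [IsFrobenius, hβ]
    exact ⟨hleft, hright⟩
  · rintro ⟨t, ht, hsymm⟩
    exact ⟨_, ht.1, ht.2, fun x y z ↦ by simp [mul_assoc], hsymm⟩

namespace IsFrobenius

variable {s t : Module.Dual F A}

theorem eq_of_forall_mul_right (ht : IsFrobenius t) {a b : A} (h : ∀ z, t (a * z) = t (b * z)) :
    a = b :=
  sub_eq_zero.mp <| ht.1 _ fun z ↦ by simp [h]

theorem comp_mulLeft_unit (ht : IsFrobenius t) (u : Aˣ) :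
    IsFrobenius (t ∘ₗ LinearMap.mulLeft F (u : A)) := by
  refine ⟨fun x hx ↦ ?_, fun y hy ↦ ht.2 y fun x ↦ ?_⟩
  · simpa using ht.1 (u * x) fun y ↦ by simpa [mul_assoc] using hx y
  · simpa [mul_assoc] using hy (u⁻¹ * x)

variable [FiniteDimensional F A]

theorem exists_forall_eq_mul (ht : IsFrobenius t) (f : Module.Dual F A) :
    ∃ w, ∀ z, f z = t (w * z) :=
  ⟨(LinearMap.BilinForm.toDual _ ht).symm f,
    fun z ↦ (LinearMap.BilinForm.apply_toDual_symm_apply (hB := ht) f z).symm⟩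

theorem exists_unit_forall_eq_mul (hs : IsFrobenius s) (ht : IsFrobenius t) :
    ∃ u : Aˣ, ∀ z, s z = t (u * z) := by
  obtain ⟨u, hu⟩ := ht.exists_forall_eq_mul s
  obtain ⟨v, hv⟩ := hs.exists_forall_eq_mul t
  have huv : u * v = 1 := ht.eq_of_forall_mul_right fun z ↦ by rw [mul_assoc, ← hu, ← hv, one_mul]
  have hvu : v * u = 1 := hs.eq_of_forall_mul_right fun z ↦ by rw [mul_assoc, ← hv, ← hu, one_mul]
  exact ⟨⟨u, v, huv, hvu⟩, hu⟩

theorem exists_symmetric_iff_inner (ht : IsFrobenius t) {ν : A → A}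
    (hν : ∀ y z, t (y * z) = t (z * ν y)) :
    (∃ s : Module.Dual F A, IsFrobenius s ∧ ∀ x y, s (x * y) = s (y * x)) ↔
      ∃ u : Aˣ, ∀ a, ν a = u * a * ↑u⁻¹ := by
  constructor
  · rintro ⟨s, hs, hsymm⟩
    obtain ⟨u, hu⟩ := ht.exists_unit_forall_eq_mul hs
    refine ⟨u, fun a ↦ (Units.eq_mul_inv_iff_mul_eq u).mpr ?_⟩
    refine hs.eq_of_forall_mul_right fun z ↦ ?_
    calc s (ν a * u * z) = s (u * (z * ν a)) := by rw [mul_assoc, hsymm, mul_assoc]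
      _ = s (u * a * z) := by rw [← hu, ← hν, hu, mul_assoc]
  · rintro ⟨u, hu⟩
    have htwist (w : A) : t (↑u⁻¹ * w) = t (w * ↑u⁻¹) := by rw [hν, hu]; simp
    refine ⟨_, ht.comp_mulLeft_unit u⁻¹, fun x y ↦ ?_⟩
    calc t (↑u⁻¹ * (x * y)) = t (y * ν (↑u⁻¹ * x)) := by rw [← mul_assoc, hν]
      _ = t (y * x * ↑u⁻¹) := by rw [hu]; simp [mul_assoc]
      _ = t (↑u⁻¹ * (y * x)) := (htwist _).symm

end IsFrobenius

end Frobenius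

section Integral

variable (R : Type*) {H : Type*} [CommSemiring R] [Semiring H] [Bialgebra R H]

/-- Left integrals in a bialgebra: the elements on which left multiplication acts through the
counit. -/
def IsLeftIntegral (l : H) : Prop :=
  ∀ h : H, h * l = counit (R := R) h • l

/-- Right integrals in a bialgebra: the elements on which right multiplication acts through the
counit. -/
def IsRightIntegral (l : H) : Prop :=
  ∀ h : H, l * h = counit (R := R) h • l

end Integral

theorem IsFrobenius.exists_isLeftIntegral_and_isRightIntegral {F H : Type*} [Field F] [Ring H]
    [Bialgebra F H] [FiniteDimensional F H] {t : Module.Dual F H} (ht : IsFrobenius t)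
    (hsymm : ∀ x y, t (x * y) = t (y * x)) :
    ∃ l : H, l ≠ 0 ∧ IsLeftIntegral F l ∧ IsRightIntegral F l := by
  obtain ⟨l, hl⟩ := ht.exists_forall_eq_mul (counit (R := F) (A := H))
  refine ⟨l, ?_, fun h ↦ ?_, fun h ↦ ?_⟩
  · rintro rfl
    simpa using hl 1
  · refine ht.eq_of_forall_mul_right fun z ↦ ?_
    calc t (h * l * z) = counit (R := F) (z * h) := by rw [mul_assoc, hsymm, mul_assoc, hl]
      _ = t (counit (R := F) h • l * z) := by
        rw [Bialgebra.counit_mul, mul_comm, smul_mul_assoc, map_smul, ← hl, smul_eq_mul]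
  · refine ht.eq_of_forall_mul_right fun z ↦ ?_
    calc t (l * h * z) = counit (R := F) (h * z) := by rw [mul_assoc, hl]
      _ = t (counit (R := F) h • l * z) := by
        rw [Bialgebra.counit_mul, smul_mul_assoc, map_smul, ← hl, smul_eq_mul]

section Contraction

section Module

variable {R M N : Type*} [CommSemiring R] [AddCommMonoid M] [Module R M] [AddCommMonoid N]
  [Module R N]

/-- Contraction of the second tensor factor with a functional: `x ⊗ y ↦ f y • x`. Applied to
`comul x` it gives `x₁ f(x₂)`, the left action `f ⇀ x` of the dual algebra on a coalgebra. -/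
noncomputable def contractSnd (f : Module.Dual R N) : M ⊗[R] N →ₗ[R] M :=
  (TensorProduct.rid R M).toLinearMap ∘ₗ f.lTensor M

@[simp]
theorem contractSnd_tmul (f : Module.Dual R N) (x : M) (y : N) :
    contractSnd f (x ⊗ₜ y) = f y • x := by
  simp [contractSnd]

theorem contractSnd_sum {ι : Type*} (s : Finset ι) (f : ι → Module.Dual R N) (t : M ⊗[R] N) :
    contractSnd (∑ i ∈ s, f i) t = ∑ i ∈ s, contractSnd (f i) t := by
  simp [contractSnd, ← LinearMap.coe_lTensorHom]

end Module

variable {R H : Type*} [CommSemiring R] [Semiring H] [Algebra R H]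

theorem contractSnd_tmul_mul (f : Module.Dual R H) (a b : H) (t : H ⊗[R] H) :
    contractSnd f ((a ⊗ₜ b) * t) = a * contractSnd (f ∘ₗ LinearMap.mulLeft R b) t := by
  induction t with
  | zero => simp
  | tmul x y => simp
  | add t t' ht ht' => simp [mul_add, ht, ht']

theorem contractSnd_mul_tmul (f : Module.Dual R H) (a b : H) (t : H ⊗[R] H) :
    contractSnd f (t * (a ⊗ₜ b)) = contractSnd (f ∘ₗ LinearMap.mulRight R b) t * a := by
  induction t with
  | zero => simp
  | tmul x y => simp
  | add t t' ht ht' => simp [add_mul, ht, ht']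

theorem mul'_lTensor_eq_sum_contractSnd {ι : Type*} [Fintype ι] (b : Module.Basis ι R H)
    (g : H →ₗ[R] H) (t : H ⊗[R] H) :
    LinearMap.mul' R H (g.lTensor H t) = ∑ i, contractSnd (b.coord i ∘ₗ g) t * b i := by
  induction t with
  | zero => simp
  | tmul x y =>
    calc x * g y = x * ∑ i, b.repr (g y) i • b i := by rw [b.sum_repr]
      _ = ∑ i, b.repr (g y) i • (x * b i) := by simp only [Finset.mul_sum, mul_smul_comm]
      _ = ∑ i, contractSnd (b.coord i ∘ₗ g) (x ⊗ₜ y) * b i := by simp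
  | add t t' ht ht' => simp [add_mul, ht, ht', Finset.sum_add_distrib]

end Contraction

section Antipode

variable {R H B : Type*} [CommSemiring R] [Semiring H] [HopfAlgebra R H] [Semiring B] [Algebra R B]

theorem toConv_algHom_mul_toConv_comp_antipode (φ : H →ₐ[R] B) :
    toConv φ.toLinearMap * toConv (φ.toLinearMap ∘ₗ antipode R) = 1 := by
  have h := LinearMap.algHom_comp_convMul_distrib φ (toConv LinearMap.id) (toConv (antipode R))
  rw [LinearMap.id_mul_antipode] at h
  ext x
  simpa using (LinearMap.congr_fun h x).symm

theorem toConv_comp_antipode_mul_toConv_algHom (φ : H →ₐ[R] B) :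
    toConv (φ.toLinearMap ∘ₗ antipode R) * toConv φ.toLinearMap = 1 := by
  have h := LinearMap.algHom_comp_convMul_distrib φ (toConv (antipode R)) (toConv LinearMap.id)
  rw [LinearMap.antipode_mul_id] at h
  ext x
  simpa using (LinearMap.congr_fun h x).symm

theorem toConv_comul_eq_includeLeft_mul_includeRight :
    toConv (comul (R := R) (A := H)) =
      toConv (Algebra.TensorProduct.includeLeft : H →ₐ[R] H ⊗[R] H).toLinearMap *
        toConv (Algebra.TensorProduct.includeRight : H →ₐ[R] H ⊗[R] H).toLinearMap := by
  ext x
  simp [(ℛ R x).convMul_apply, (ℛ R x).eq]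

theorem sum_antipode_tmul_one_mul_comul {ι : Type*} {h : H} (r : Repr R h ι) :
    ∑ i ∈ r.index, (antipode R (r.left i) ⊗ₜ[R] (1 : H)) * comul (R := R) (r.right i) =
      1 ⊗ₜ h := by
  have hconv : toConv ((Algebra.TensorProduct.includeLeft : H →ₐ[R] H ⊗[R] H).toLinearMap ∘ₗ
        antipode R) * toConv (comul (R := R)) =
      toConv (Algebra.TensorProduct.includeRight : H →ₐ[R] H ⊗[R] H).toLinearMap := by
    rw [toConv_comul_eq_includeLeft_mul_includeRight, ← mul_assoc,
      toConv_comp_antipode_mul_toConv_algHom, one_mul]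
  simpa [r.convMul_apply] using congrArg (fun φ ↦ φ.ofConv h) hconv

theorem sum_comul_mul_one_tmul_antipode {ι : Type*} {h : H} (r : Repr R h ι) :
    ∑ i ∈ r.index, comul (R := R) (r.left i) * ((1 : H) ⊗ₜ[R] antipode R (r.right i)) =
      h ⊗ₜ 1 := by
  have hconv : toConv (comul (R := R)) *
        toConv ((Algebra.TensorProduct.includeRight : H →ₐ[R] H ⊗[R] H).toLinearMap ∘ₗ
          antipode R) =
      toConv (Algebra.TensorProduct.includeLeft : H →ₐ[R] H ⊗[R] H).toLinearMap := by
    rw [toConv_comul_eq_includeLeft_mul_includeRight, mul_assoc,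
      toConv_algHom_mul_toConv_comp_antipode, mul_one]
  simpa [r.convMul_apply] using congrArg (fun φ ↦ φ.ofConv h) hconv

end Antipode

section IntegralContraction

variable {R H : Type*} [CommSemiring R] [Semiring H] [HopfAlgebra R H] {L : H}

theorem IsLeftIntegral.one_tmul_mul_comul (hL : IsLeftIntegral R L) (h : H) :
    ((1 : H) ⊗ₜ[R] h) * comul L = (antipode R h ⊗ₜ 1) * comul L := by
  have hr : ∑ i ∈ (ℛ R h).index, counit (R := R) ((ℛ R h).right i) • (ℛ R h).left i = h := by
    simpa only [map_sum, TensorProduct.rid_tmul, one_smul] using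
      congrArg (TensorProduct.rid R H) (sum_tmul_counit_eq (ℛ R h))
  calc ((1 : H) ⊗ₜ[R] h) * comul L
      = ∑ i ∈ (ℛ R h).index,
          (antipode R ((ℛ R h).left i) ⊗ₜ[R] (1 : H)) * comul ((ℛ R h).right i * L) := by
        simp [← sum_antipode_tmul_one_mul_comul (ℛ R h), Finset.sum_mul, mul_assoc]
    _ = ∑ i ∈ (ℛ R h).index, (antipode R (counit (R := R) ((ℛ R h).right i) • (ℛ R h).left i)
          ⊗ₜ[R] (1 : H)) * comul L := by
        simp only [hL _, map_smul, mul_smul_comm, ← smul_tmul', smul_mul_assoc]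
    _ = (antipode R h ⊗ₜ 1) * comul L := by
        rw [← Finset.sum_mul, ← sum_tmul, ← map_sum, hr]

theorem IsRightIntegral.comul_mul_tmul_one (hL : IsRightIntegral R L) (h : H) :
    comul L * (h ⊗ₜ[R] (1 : H)) = comul L * (1 ⊗ₜ antipode R h) := by
  calc comul L * (h ⊗ₜ[R] (1 : H))
      = ∑ i ∈ (ℛ R h).index,
          comul (L * (ℛ R h).left i) * ((1 : H) ⊗ₜ[R] antipode R ((ℛ R h).right i)) := by
        simp [← sum_comul_mul_one_tmul_antipode (ℛ R h), Finset.mul_sum, mul_assoc]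
    _ = ∑ i ∈ (ℛ R h).index, comul L *
          ((1 : H) ⊗ₜ[R] antipode R (counit (R := R) ((ℛ R h).left i) • (ℛ R h).right i)) := by
        simp only [hL _, map_smul, mul_smul_comm, tmul_smul, smul_mul_assoc]
    _ = comul L * (1 ⊗ₜ antipode R h) := by
        rw [← Finset.mul_sum, ← tmul_sum, ← map_sum, sum_counit_smul]

theorem IsLeftIntegral.contractSnd_mulLeft_comul (hL : IsLeftIntegral R L)
    (f : Module.Dual R H) (h : H) :
    contractSnd (f ∘ₗ LinearMap.mulLeft R h) (comul L) =
      antipode R h * contractSnd f (comul L) := by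
  have hcontract := congrArg (contractSnd f) (hL.one_tmul_mul_comul h)
  simpa [contractSnd_tmul_mul] using hcontract

theorem IsRightIntegral.contractSnd_mulRight_antipode_comul (hL : IsRightIntegral R L)
    (f : Module.Dual R H) (h : H) :
    contractSnd (f ∘ₗ LinearMap.mulRight R (antipode R h)) (comul L) =
      contractSnd f (comul L) * h := by
  have hcontract := congrArg (contractSnd f) (hL.comul_mul_tmul_one h)
  simpa [contractSnd_mul_tmul] using hcontract.symm

namespace IsRightIntegral

theorem exists_contractSnd_comul_eq_convMul [Module.Finite R H] [Module.Free R H]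
    (hL : IsRightIntegral R L) (g : WithConv (H →ₗ[R] H)) :
    ∃ lam : Module.Dual R H,
      contractSnd lam (comul L) = (toConv LinearMap.id * g : WithConv (H →ₗ[R] H)) L := by
  let b := Module.Free.chooseBasis R H
  refine ⟨∑ i, (b.coord i ∘ₗ g.ofConv) ∘ₗ LinearMap.mulRight R (antipode R (b i)), ?_⟩
  calc contractSnd (∑ i, (b.coord i ∘ₗ g.ofConv) ∘ₗ LinearMap.mulRight R (antipode R (b i)))
        (comul L)
      = ∑ i, contractSnd (b.coord i ∘ₗ g.ofConv) (comul L) * b i := by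
        simp only [contractSnd_sum, hL.contractSnd_mulRight_antipode_comul]
    _ = LinearMap.mul' R H (g.ofConv.lTensor H (comul L)) :=
        (mul'_lTensor_eq_sum_contractSnd b g.ofConv (comul L)).symm

theorem exists_contractSnd_comul_eq_smul_one [Module.Finite R H] [Module.Free R H]
    (hL : IsRightIntegral R L) (f : Module.Dual R H) :
    ∃ lam : Module.Dual R H, contractSnd lam (comul L) = f L • 1 := by
  let φ : WithConv (H →ₗ[R] H) := toConv (Algebra.linearMap R H ∘ₗ f)
  obtain ⟨lam, hlam⟩ := hL.exists_contractSnd_comul_eq_convMul (toConv (antipode R) * φ)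
  refine ⟨lam, hlam.trans ?_⟩
  rw [← mul_assoc, LinearMap.id_mul_antipode, one_mul]
  exact Algebra.algebraMap_eq_smul_one (f L)

theorem contractSnd_mulRight_antipode_comul_of_eq_one (hL : IsRightIntegral R L)
    {lam : Module.Dual R H} (hlam : contractSnd lam (comul L) = 1) (h : H) :
    contractSnd (lam ∘ₗ LinearMap.mulRight R (antipode R h)) (comul L) = h := by
  rw [hL.contractSnd_mulRight_antipode_comul, hlam, one_mul]

theorem antipode_injective (hL : IsRightIntegral R L) {lam : Module.Dual R H}
    (hlam : contractSnd lam (comul L) = 1) : Function.Injective (antipode R (A := H)) := by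
  intro h h' hS
  rw [← hL.contractSnd_mulRight_antipode_comul_of_eq_one hlam h, hS,
    hL.contractSnd_mulRight_antipode_comul_of_eq_one hlam h']

end IsRightIntegral

end IntegralContraction

section HopfFrobenius

variable {F H : Type*} [Field F] [Ring H] [HopfAlgebra F H] [FiniteDimensional F H] {L : H}
  {lam : Module.Dual F H}

theorem IsRightIntegral.exists_contractSnd_comul_eq_one (hL : IsRightIntegral F L)
    (hL0 : L ≠ 0) : ∃ lam : Module.Dual F H, contractSnd lam (comul L) = 1 := by
  obtain ⟨f, hf⟩ := Module.Projective.exists_dual_eq_one F hL0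
  simpa [hf] using hL.exists_contractSnd_comul_eq_smul_one f

theorem IsRightIntegral.isFrobenius (hL : IsRightIntegral F L)
    (hlam : contractSnd lam (comul L) = 1) : IsFrobenius lam := by
  refine LinearMap.BilinForm.Nondegenerate.ofSeparatingRight fun w hw ↦ ?_
  obtain ⟨h, rfl⟩ := LinearMap.surjective_of_injective (hL.antipode_injective hlam) w
  have hzero : lam ∘ₗ LinearMap.mulRight F (antipode F h) = 0 := LinearMap.ext hw
  have hh := hL.contractSnd_mulRight_antipode_comul_of_eq_one hlam h
  rw [← hh, hzero]
  simp [contractSnd]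

theorem IsRightIntegral.apply_mul_eq_apply_mul_antipode_antipode (hL : IsRightIntegral F L)
    (hL' : IsLeftIntegral F L) (hlam : contractSnd lam (comul L) = 1) (y z : H) :
    lam (y * z) = lam (z * antipode F (antipode F y)) := by
  let μ := lam ∘ₗ LinearMap.mulRight F (antipode F (antipode F y))
  obtain ⟨w, hw⟩ := (hL.isFrobenius hlam).exists_forall_eq_mul μ
  have hμ : μ = lam ∘ₗ LinearMap.mulLeft F w := LinearMap.ext hw
  have hSw : antipode F w = antipode F y := by
    calc antipode F w = contractSnd μ (comul L) := by
          rw [hμ, hL'.contractSnd_mulLeft_comul, hlam, mul_one]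
      _ = antipode F y := hL.contractSnd_mulRight_antipode_comul_of_eq_one hlam _
  calc lam (y * z) = lam (w * z) := by rw [hL.antipode_injective hlam hSw]
    _ = lam (z * antipode F (antipode F y)) := (hw z).symm

theorem exists_isFrobenius_forall_apply_mul_eq (hL0 : L ≠ 0) (hleft : IsLeftIntegral F L)
    (hright : IsRightIntegral F L) :
    ∃ lam : Module.Dual F H, IsFrobenius lam ∧
      ∀ y z, lam (y * z) = lam (z * antipode F (antipode F y)) := by
  obtain ⟨lam, hlam⟩ := hright.exists_contractSnd_comul_eq_one hL0
  exact ⟨lam, hright.isFrobenius hlam,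
    hright.apply_mul_eq_apply_mul_antipode_antipode hleft hlam⟩

variable (F H) in
theorem exists_symmetric_isFrobenius_iff :
    (∃ t : Module.Dual F H, IsFrobenius t ∧ ∀ x y, t (x * y) = t (y * x)) ↔
      (∃ l : H, l ≠ 0 ∧ IsLeftIntegral F l ∧ IsRightIntegral F l) ∧
        ∃ u : Hˣ, ∀ h : H, antipode F (antipode F h) = u * h * ↑u⁻¹ := by
  have inner_iff {l : H} (hl0 : l ≠ 0) (hleft : IsLeftIntegral F l) (hright : IsRightIntegral F l) :
      (∃ t : Module.Dual F H, IsFrobenius t ∧ ∀ x y, t (x * y) = t (y * x)) ↔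
        ∃ u : Hˣ, ∀ h : H, antipode F (antipode F h) = u * h * ↑u⁻¹ := by
    obtain ⟨lam, hfrob, hnak⟩ := exists_isFrobenius_forall_apply_mul_eq hl0 hleft hright
    exact hfrob.exists_symmetric_iff_inner hnak
  constructor
  · rintro ⟨t, ht, hsymm⟩
    obtain ⟨l, hl0, hleft, hright⟩ := ht.exists_isLeftIntegral_and_isRightIntegral hsymm
    exact ⟨⟨l, hl0, hleft, hright⟩, (inner_iff hl0 hleft hright).mp ⟨t, ht, hsymm⟩⟩
  · rintro ⟨⟨l, hl0, hleft, hright⟩, hinner⟩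
    exact (inner_iff hl0 hleft hright).mpr hinner

end HopfFrobenius

/-- Oberst–Schneider. A finite-dimensional Hopf algebra `H` over a field
`F` is a symmetric Frobenius algebra (i.e. admits a nondegenerate symmetric bilinear form
`β` with `β (x*y) z = β x (y*z)`) if and only if `H` is unimodular (there is a nonzero
element which is both a left and a right integral in `H`) and the square of the antipode
is an inner automorphism of `H`. -/
theorem stmt3
    (F : Type) [Field F] (H : Type) [Ring H] [HopfAlgebra F H] [FiniteDimensional F H] :
    (∃ β : H →ₗ[F] H →ₗ[F] F,
        (∀ x, (∀ y, β x y = 0) → x = 0) ∧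
        (∀ y, (∀ x, β x y = 0) → y = 0) ∧
        (∀ x y z, β (x * y) z = β x (y * z)) ∧
        (∀ x y, β x y = β y x)) ↔
      ((∃ l : H, l ≠ 0 ∧ (∀ h : H, h * l = Coalgebra.counit (R := F) h • l) ∧
          (∀ h : H, l * h = Coalgebra.counit (R := F) h • l)) ∧
        (∃ u : Hˣ, ∀ h : H,
          HopfAlgebra.antipode (R := F) (HopfAlgebra.antipode (R := F) h)
            = ↑u * h * ↑u⁻¹)) :=
  exists_symmetric_frobenius_form_iff.trans (exists_symmetric_isFrobenius_iff F H)
end
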